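/- Fix T > 0 and an integer β₁ ≥ 1. For n ∈ ℕ let B_n be the (n+1)×(n+1) real matrix with entries (B_n)_{j,k} = I_{k−j}(T) for 1 ≤ j ≤ n+1 and 1 ≤ k ≤ n, and (B_n)_{j,n+1} = I_{n+β₁−j}(T) for 1 ≤ j ≤ n+1. Then, as n → ∞, det B_n = e^{T²/4} (T/2)^{β₁−1} / (β₁−1)! · (1 + O(e^{−cn})), where c may be taken to be any positive constant. -/

import Mathlib

open Matrix Real

/-- The modified Bessel function of integer order `ν`:
`I_ν(T) = (1/π) ∫_0^π e^{T cos θ} cos(νθ) dθ`. -/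
noncomputable def besselI (ν : ℤ) (T : ℝ) : ℝ :=
  (1 / Real.pi) * ∫ θ in (0:ℝ)..Real.pi, Real.exp (T * Real.cos θ) * Real.cos ((ν : ℝ) * θ)

/-!
Write the symbol as `φ₊(z) e^{b/z}` with `φ₊(z) = ∑_{ν ≥ 0} c_ν z^ν` and `c_0 = 1`, and let `D_n`
be the Toeplitz determinant of size `n` and `B_{n,m}` the determinant of size `n + 1` whose last
column is shifted by `m`. Adding to the last row the rows above it with weights `(-b)^l / l!`
multiplies the symbol by a truncation of `e^{-b/z}`, which turns that row into the last row of the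
upper triangular matrix of `φ₊`, up to Taylor remainders of order `|b|^n / n!`. Hence
`B_{n,m} ≈ c_m D_n`, with an error smaller than any exponential, uniformly for bounded `b`. For
`m = 0` this says `D_{n+1} ≈ D_n`. Differentiating the symbol in `b` divides it by `z`, so only
the last column contributes to the derivative of `D_{n+1}`, which is therefore
`B_{n,1} ≈ c_1 D_{n+1}`. Since `D_{n+1} = 1` at `b = 0`, integration gives `D_{n+1} ≈ e^{b c_1}`
and so `B_{n,m} ≈ c_m e^{b c_1}`. The Bessel symbol is the case `φ₊(z) = e^{bz}`, `b = T / 2`.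
-/

open Filter Asymptotics
open scoped Nat

section Determinants

variable {ι R : Type*} [Fintype ι] [DecidableEq ι]

theorem norm_det_le_prod_sum_norm [NormedCommRing R] [NormOneClass R] (M : Matrix ι ι R) :
    ‖M.det‖ ≤ ∏ i, ∑ j, ‖M i j‖ := by
  have norm_term_le (σ : Equiv.Perm ι) :
      ‖Equiv.Perm.sign σ • ∏ i, M i (σ i)‖ ≤ ∏ i, ‖M i (σ i)‖ := by
    rcases Int.units_eq_one_or (Equiv.Perm.sign σ) with h | h <;>
      simpa [h] using Finset.univ.norm_prod_le fun i => M i (σ i)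
  calc ‖M.det‖
      = ‖∑ σ : Equiv.Perm ι, Equiv.Perm.sign σ • ∏ i, M i (σ i)‖ := by
        rw [← M.det_transpose, det_apply]; rfl
    _ ≤ ∑ σ : Equiv.Perm ι, ∏ i, ‖M i (σ i)‖ :=
        norm_sum_le_of_le _ fun σ _ => norm_term_le σ
    _ = ∑ f ∈ Finset.univ.map ⟨fun σ : Equiv.Perm ι => (σ : ι → ι), DFunLike.coe_injective⟩,
          ∏ i, ‖M i (f i)‖ := by simp
    _ ≤ ∑ f : ι → ι, ∏ i, ‖M i (f i)‖ :=
        Finset.sum_le_sum_of_subset_of_nonneg (Finset.subset_univ _) fun _ _ _ => by positivity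
    _ = ∏ i, ∑ j, ‖M i j‖ := by rw [Finset.prod_univ_sum, Fintype.piFinset_univ]

theorem norm_det_updateRow_le [NormedCommRing R] [NormOneClass R] (M : Matrix ι ι R) (i₀ : ι)
    (v : ι → R) {S : ℝ} (hS : ∀ i, ∑ j, ‖M i j‖ ≤ S) :
    ‖(M.updateRow i₀ v).det‖ ≤ S ^ (Fintype.card ι - 1) * ∑ j, ‖v j‖ := by
  refine (norm_det_le_prod_sum_norm _).trans ?_
  rw [← Finset.prod_erase_mul _ _ (Finset.mem_univ i₀), updateRow_self]
  gcongr
  rw [← Finset.card_univ, ← Finset.card_erase_of_mem (Finset.mem_univ i₀), ← Finset.prod_const]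
  refine Finset.prod_le_prod (fun _ _ => by positivity) fun i hi => ?_
  rw [updateRow_ne (Finset.ne_of_mem_erase hi)]
  exact hS i

theorem hasDerivAt_det {𝕜 : Type*} [NontriviallyNormedField 𝕜] {M : 𝕜 → Matrix ι ι 𝕜}
    {M' : Matrix ι ι 𝕜} {x : 𝕜} (hM : ∀ i j, HasDerivAt (fun y => M y i j) (M' i j) x) :
    HasDerivAt (fun y => (M y).det) (∑ k, ((M x).updateCol k fun i => M' i k).det) x := by
  simp_rw [det_apply']
  rw [Finset.sum_comm]
  refine HasDerivAt.fun_sum fun σ _ => ?_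
  rw [← Finset.mul_sum]
  refine ((HasDerivAt.fun_finsetProd fun i _ => hM (σ i) i).congr_deriv ?_).const_mul _
  refine Finset.sum_congr rfl fun k _ => ?_
  rw [← Finset.prod_erase_mul _ _ (Finset.mem_univ k), smul_eq_mul, updateCol_self]
  congr 1
  exact Finset.prod_congr rfl fun i hi => by rw [updateCol_ne (Finset.ne_of_mem_erase hi)]

end Determinants

section Toeplitz

variable {R : Type*}

/-- The `n × n` Toeplitz matrix of the Laurent coefficients `g`, with `g (k - j)` in row `j` and
column `k`. -/
def toeplitz (g : ℤ → R) (n : ℕ) : Matrix (Fin n) (Fin n) R :=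
  of fun j k => g (k - j)

/-- The position of column `k` of a bordered Toeplitz matrix: columns `0, …, n - 1` are in place and
column `n` is moved `m` places to the right. -/
def borderedIndex (n m : ℕ) (k : Fin (n + 1)) : ℤ :=
  if (k : ℕ) < n then k else n + m

/-- The single-bordered Toeplitz matrix of size `n + 1`, whose last column has gap `m`. Here `m` is
`β₁ - 1` in terms of the end point `n + β₁` of the top walk, so that `m = 0` is an ordinary Toeplitz
matrix. -/
def borderedToeplitz (g : ℤ → R) (n m : ℕ) : Matrix (Fin (n + 1)) (Fin (n + 1)) R :=
  of fun j k => g (borderedIndex n m k - j)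

@[simp]
theorem borderedIndex_castSucc (n m : ℕ) (k : Fin n) : borderedIndex n m k.castSucc = k := by
  simp [borderedIndex]

@[simp]
theorem borderedIndex_last (n m : ℕ) : borderedIndex n m (Fin.last n) = n + m := by
  simp [borderedIndex]

theorem borderedIndex_injective (n m : ℕ) : Function.Injective (borderedIndex n m) := by
  intro x y h
  simp only [borderedIndex] at h
  ext
  split_ifs at h <;> omega

theorem borderedToeplitz_zero (g : ℤ → R) (n : ℕ) :
    borderedToeplitz g n 0 = toeplitz g (n + 1) := by
  ext j k
  cases k using Fin.lastCases <;> simp [borderedToeplitz, toeplitz]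

theorem det_toeplitz_of_upperTriangular [CommRing R] {g : ℤ → R} (hg : ∀ ν < 0, g ν = 0) (n : ℕ) :
    (toeplitz g n).det = g 0 ^ n := by
  rw [det_of_isUpperTriangular]
  · simp [toeplitz]
  · intro j k hkj
    exact hg _ (by simpa using hkj)

theorem det_borderedToeplitz_updateRow_single [CommRing R] (g : ℤ → R) (n m : ℕ) :
    ((borderedToeplitz g n m).updateRow (Fin.last n) (Pi.single (Fin.last n) 1)).det =
      (toeplitz g n).det := by
  rw [← adjugate_apply, adjugate_fin_succ_eq_det_submatrix, Even.neg_one_pow (by simp), one_mul]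
  congr 1
  ext j k
  simp [borderedToeplitz, toeplitz]

theorem det_borderedToeplitz_eq_det_updateRow [CommRing R] (g : ℤ → R) (n m : ℕ) {w : ℕ → R}
    (hw : w 0 = 1) :
    (borderedToeplitz g n m).det = ((borderedToeplitz g n m).updateRow (Fin.last n) fun k =>
      ∑ l ∈ Finset.range (n + 1), w l * g (borderedIndex n m k - n + l)).det := by
  have row_eq : (fun k => ∑ l ∈ Finset.range (n + 1), w l * g (borderedIndex n m k - n + l)) =
      ∑ j : Fin (n + 1), w (n - j) • borderedToeplitz g n m j := by
    ext k
    rw [← Finset.sum_range_reflect, Finset.sum_apply, Finset.sum_range]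
    refine Finset.sum_congr rfl fun j _ => ?_
    have hj : borderedIndex n m k - n + (n - j : ℕ) = borderedIndex n m k - j := by omega
    simp [borderedToeplitz, hj]
  rw [row_eq, det_updateRow_sum]
  simp [hw]

theorem hasDerivAt_det_toeplitz_succ {𝕜 : Type*} [NontriviallyNormedField 𝕜] {f : 𝕜 → ℤ → 𝕜}
    {x : 𝕜} (hf : ∀ ν, HasDerivAt (fun b => f b ν) (f x (ν + 1)) x) (n : ℕ) :
    HasDerivAt (fun b => (toeplitz (f b) (n + 1)).det) (borderedToeplitz (f x) n 1).det x := by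
  refine (hasDerivAt_det (M := fun b => toeplitz (f b) (n + 1))
    (M' := of fun j k => f x (k - j + 1)) fun j k => hf _).congr_deriv ?_
  have hlast : (toeplitz (f x) (n + 1)).updateCol (Fin.last n)
      (fun j => f x ((Fin.last n : Fin (n + 1)) - j + 1)) = borderedToeplitz (f x) n 1 := by
    ext j k
    cases k using Fin.lastCases with
    | last => simp [borderedToeplitz, add_sub_right_comm]
    | cast k => simp [borderedToeplitz, toeplitz, (Fin.castSucc_lt_last k).ne]
  -- The derivative of every other column is the next column of the matrix.
  rw [Finset.sum_eq_single (Fin.last n) _ (by simp)]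
  · exact congrArg det hlast
  · intro k _ hk
    obtain ⟨k, rfl⟩ := Fin.exists_castSucc_eq.mpr hk
    refine det_zero_of_column_eq (Fin.castSucc_lt_succ (i := k)).ne fun j => ?_
    rw [updateCol_self, updateCol_ne Fin.castSucc_lt_succ.ne']
    simp [toeplitz, add_sub_right_comm]

end Toeplitz

section ExpShift

variable {𝕜 : Type*} [RCLike 𝕜] {c : ℤ → 𝕜}

theorem norm_exp_le_exp_norm (x : 𝕜) : ‖NormedSpace.exp x‖ ≤ Real.exp ‖x‖ := by
  rw [Real.exp_eq_exp_ℝ]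
  exact (NormedSpace.expSeries_div_hasSum_exp x).norm_le_of_bounded
    (NormedSpace.expSeries_div_hasSum_exp ‖x‖) fun k => by simp

/-- The Laurent coefficients of `φ(z) e^{b/z}`, where `c` are those of `φ`. -/
noncomputable def expShift (c : ℤ → 𝕜) (b : 𝕜) (ν : ℤ) : 𝕜 :=
  ∑' k : ℕ, c (ν + k) * (b ^ k / k !)

@[simp]
theorem expShift_zero (c : ℤ → 𝕜) : expShift c 0 = c := by
  ext ν
  rw [expShift, tsum_eq_single 0 fun k hk => by simp [hk]]
  simp

theorem norm_coeff_mul_pow_div_factorial_le (hc : Summable c) (b : 𝕜) (ν : ℤ) (k : ℕ) :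
    ‖c ν * (b ^ k / k !)‖ ≤ (∑' μ, ‖c μ‖) * (‖b‖ ^ k / k !) := by
  rw [norm_mul, norm_div, norm_pow, RCLike.norm_natCast]
  gcongr
  exact hc.norm.le_tsum ν fun _ _ => norm_nonneg _

theorem summable_expShift (hc : Summable c) (b : 𝕜) (ν : ℤ) :
    Summable fun k : ℕ => ‖c (ν + k) * (b ^ k / k !)‖ :=
  .of_nonneg_of_le (fun _ => norm_nonneg _)
    (fun k => norm_coeff_mul_pow_div_factorial_le hc b (ν + k) k)
    ((Real.summable_pow_div_factorial ‖b‖).mul_left _)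

theorem sum_norm_expShift_le (hc : Summable c) (b : 𝕜) (s : Finset ℤ) :
    ∑ ν ∈ s, ‖expShift c b ν‖ ≤ (∑' ν, ‖c ν‖) * Real.exp ‖b‖ := by
  have hsum (k : ℕ) : ∑ ν ∈ s, ‖c (ν + k)‖ ≤ ∑' ν, ‖c ν‖ := by
    rw [← (Equiv.addRight (k : ℤ)).tsum_eq fun ν => ‖c ν‖]
    exact ((Equiv.addRight (k : ℤ)).summable_iff.mpr hc.norm).sum_le_tsum s
      fun _ _ => norm_nonneg _
  calc ∑ ν ∈ s, ‖expShift c b ν‖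
      ≤ ∑ ν ∈ s, ∑' k : ℕ, ‖c (ν + k) * (b ^ k / k !)‖ := by
        gcongr with ν
        exact norm_tsum_le_tsum_norm (summable_expShift hc b ν)
    _ = ∑' k : ℕ, ∑ ν ∈ s, ‖c (ν + k) * (b ^ k / k !)‖ :=
        (Summable.tsum_finsetSum fun ν _ => summable_expShift hc b ν).symm
    _ = ∑' k : ℕ, (∑ ν ∈ s, ‖c (ν + k)‖) * (‖b‖ ^ k / k !) := by
        simp [Finset.sum_mul]
    _ ≤ (∑' ν, ‖c ν‖) * Real.exp ‖b‖ := by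
        rw [Real.exp_eq_exp_ℝ, NormedSpace.exp_eq_tsum_div, ← tsum_mul_left]
        have hbound := (Real.summable_pow_div_factorial ‖b‖).mul_left (∑' ν, ‖c ν‖)
        have hle (k : ℕ) : (∑ ν ∈ s, ‖c (ν + k)‖) * (‖b‖ ^ k / k !) ≤
            (∑' ν, ‖c ν‖) * (‖b‖ ^ k / k !) := by gcongr; exact hsum k
        exact (hbound.of_nonneg_of_le (fun _ => by positivity) hle).tsum_le_tsum hle hbound

theorem norm_expShift_le (hc : Summable c) (b : 𝕜) (ν : ℤ) :
    ‖expShift c b ν‖ ≤ (∑' ν, ‖c ν‖) * Real.exp ‖b‖ := by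
  simpa using sum_norm_expShift_le hc b {ν}

theorem hasDerivAt_pow_succ_div_factorial (k : ℕ) (b : 𝕜) :
    HasDerivAt (fun x : 𝕜 => x ^ (k + 1) / (k + 1)!) (b ^ k / k !) b := by
  refine ((hasDerivAt_pow (k + 1) b).div_const _).congr_deriv ?_
  have hk : (k : 𝕜) + 1 ≠ 0 := by exact_mod_cast k.succ_ne_zero
  push_cast [Nat.factorial_succ]
  simp [mul_div_mul_left _ _ hk]

theorem hasDerivAt_expShift (hc : Summable c) (ν : ℤ) (b : 𝕜) :
    HasDerivAt (fun x => expShift c x ν) (expShift c b (ν + 1)) b := by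
  have hsplit : (fun x => expShift c x ν) =
      fun x => c ν + ∑' k : ℕ, c (ν + 1 + k) * (x ^ (k + 1) / (k + 1)!) := by
    ext x
    rw [expShift, (summable_expShift hc x ν).of_norm.tsum_eq_zero_add]
    simp [add_assoc, add_comm (1 : ℤ)]
  rw [hsplit]
  refine (hasDerivAt_tsum_of_isPreconnected (t := Metric.ball 0 (‖b‖ + 1)) (y₀ := 0)
    ((Real.summable_pow_div_factorial (‖b‖ + 1)).mul_left (∑' μ, ‖c μ‖))
    Metric.isOpen_ball (convex_ball _ _).isPreconnected
    (fun k x _ => (hasDerivAt_pow_succ_div_factorial k x).const_mul (c (ν + 1 + k)))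
    (fun k x hx => ?_) (Metric.mem_ball_self (by positivity)) (by simp [summable_zero])
    (by simp)).const_add _
  refine (norm_coeff_mul_pow_div_factorial_le hc x _ k).trans ?_
  have hx : ‖x‖ ≤ ‖b‖ + 1 := (mem_ball_zero_iff.mp hx).le
  gcongr

theorem hasDerivAt_sum_expShift (hc : Summable c) (ν : ℤ) (n : ℕ) (b : 𝕜) :
    HasDerivAt (fun x => ∑ l ∈ Finset.range (n + 1), (-x) ^ l / l ! * expShift c x (ν + l))
      ((-b) ^ n / n ! * expShift c b (ν + n + 1)) b := by
  induction n with
  | zero => simpa using hasDerivAt_expShift hc ν b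
  | succ n ih =>
    simp_rw [Finset.sum_range_succ _ (n + 1)]
    have hpow := (hasDerivAt_pow_succ_div_factorial n (-b)).scomp b (hasDerivAt_neg b)
    refine (ih.add (hpow.mul (hasDerivAt_expShift hc (ν + (n + 1 : ℕ)) b))).congr_deriv ?_
    simp [← add_assoc]

theorem norm_sum_expShift_sub_le (hc : Summable c) (ν : ℤ) (n : ℕ) (b : 𝕜) :
    ‖∑ l ∈ Finset.range (n + 1), (-b) ^ l / l ! * expShift c b (ν + l) - c ν‖ ≤
      ‖b‖ ^ n / n ! * ((∑' μ, ‖c μ‖) * Real.exp ‖b‖) * ‖b‖ := by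
  have hderiv_le (x : 𝕜) (hx : x ∈ Metric.closedBall 0 ‖b‖) :
      ‖(-x) ^ n / n ! * expShift c x (ν + n + 1)‖ ≤
        ‖b‖ ^ n / n ! * ((∑' μ, ‖c μ‖) * Real.exp ‖b‖) := by
    have hx : ‖x‖ ≤ ‖b‖ := mem_closedBall_zero_iff.mp hx
    rw [norm_mul, norm_div, norm_pow, norm_neg, RCLike.norm_natCast]
    gcongr
    refine (norm_expShift_le hc x _).trans ?_
    gcongr
  have hzero : ∑ l ∈ Finset.range (n + 1), (-(0 : 𝕜)) ^ l / l ! * expShift c 0 (ν + l) = c ν := by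
    simp [Finset.sum_range_succ']
  have hmean := (convex_closedBall (0 : 𝕜) ‖b‖).norm_image_sub_le_of_norm_hasDerivWithin_le
    (fun x _ => (hasDerivAt_sum_expShift hc ν n x).hasDerivWithinAt) hderiv_le
    (x := 0) (y := b) (by simp) (by simp)
  rwa [hzero, sub_zero] at hmean

end ExpShift

section Asymptotics

variable {𝕜 : Type*} [RCLike 𝕜] {c : ℤ → 𝕜}

theorem det_borderedToeplitz_sub_mul_det_toeplitz {R : Type*} [CommRing R] (g : ℤ → R) {c : ℤ → R}
    (hneg : ∀ ν < 0, c ν = 0) {w : ℕ → R} (hw : w 0 = 1) (n m : ℕ) :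
    (borderedToeplitz g n m).det - c m * (toeplitz g n).det =
      ((borderedToeplitz g n m).updateRow (Fin.last n) fun k =>
        ∑ l ∈ Finset.range (n + 1), w l * g (borderedIndex n m k - n + l) -
          c (borderedIndex n m k - n)).det := by
  have hlimit : (fun k => c (borderedIndex n m k - n)) = c m • Pi.single (Fin.last n) 1 := by
    ext k
    cases k using Fin.lastCases with
    | last => simp
    | cast k => simp [hneg (k - n : ℤ) (by omega), (Fin.castSucc_lt_last k).ne]
  rw [← det_borderedToeplitz_updateRow_single g n m, ← det_updateRow_smul, ← hlimit,
    det_borderedToeplitz_eq_det_updateRow g n m hw, sub_eq_iff_eq_add, ← det_updateRow_add]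
  congr 2
  ext k
  simp

/-- A bound for the error of `B_{n,m} ≈ c_m D_n` when `‖b‖ ≤ r`: the product of `n` row sums of size
at most `‖c‖₁ e^r` and the sum of the `n + 1` Taylor remainders `‖c‖₁ e^r r^{n+1} / n!` in the last
row. -/
noncomputable def borderError (c : ℤ → 𝕜) (r : ℝ) (n : ℕ) : ℝ :=
  (n + 1) * ((∑' ν, ‖c ν‖) * Real.exp r * r) ^ (n + 1) / n !

theorem borderError_nonneg {r : ℝ} (hr : 0 ≤ r) (n : ℕ) : 0 ≤ borderError c r n := by
  unfold borderError
  positivity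

theorem borderError_mono {r s : ℝ} (hr : 0 ≤ r) (hrs : r ≤ s) (n : ℕ) :
    borderError c r n ≤ borderError c s n := by
  unfold borderError
  gcongr

theorem sum_norm_borderedToeplitz_expShift_le (hc : Summable c) (b : 𝕜) (n m : ℕ)
    (j : Fin (n + 1)) :
    ∑ k, ‖borderedToeplitz (expShift c b) n m j k‖ ≤ (∑' ν, ‖c ν‖) * Real.exp ‖b‖ := by
  have hinj : Function.Injective fun k => borderedIndex n m k - j :=
    sub_left_injective.comp (borderedIndex_injective n m)
  simpa [borderedToeplitz] using sum_norm_expShift_le hc b (Finset.univ.map ⟨_, hinj⟩)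

theorem norm_det_borderedToeplitz_sub_mul_det_toeplitz_le (hc : Summable c)
    (hneg : ∀ ν < 0, c ν = 0) (b : 𝕜) (n m : ℕ) :
    ‖(borderedToeplitz (expShift c b) n m).det - c m * (toeplitz (expShift c b) n).det‖ ≤
      borderError c ‖b‖ n := by
  rw [det_borderedToeplitz_sub_mul_det_toeplitz _ hneg (w := fun l => (-b) ^ l / l !) (by simp)]
  refine (norm_det_updateRow_le _ _ _
    (sum_norm_borderedToeplitz_expShift_le hc b n m)).trans ?_
  rw [Fintype.card_fin, Nat.add_sub_cancel]
  set M := (∑' ν, ‖c ν‖) * Real.exp ‖b‖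
  calc M ^ n * ∑ k, ‖∑ l ∈ Finset.range (n + 1), (-b) ^ l / l ! *
          expShift c b (borderedIndex n m k - n + l) - c (borderedIndex n m k - n)‖
      ≤ M ^ n * ∑ _k : Fin (n + 1), ‖b‖ ^ n / n ! * M * ‖b‖ := by
        gcongr with k
        exact norm_sum_expShift_sub_le hc _ n b
    _ = borderError c ‖b‖ n := by
        simp only [Finset.sum_const, Finset.card_univ, Fintype.card_fin, nsmul_eq_mul,
          borderError, M]
        push_cast
        ring

theorem norm_det_borderedToeplitz_sub_mul_det_toeplitz_succ_le (hc : Summable c)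
    (hneg : ∀ ν < 0, c ν = 0) (hone : c 0 = 1) (b : 𝕜) (n m : ℕ) :
    ‖(borderedToeplitz (expShift c b) n m).det - c m * (toeplitz (expShift c b) (n + 1)).det‖ ≤
      (1 + ‖c m‖) * borderError c ‖b‖ n := by
  set B := (borderedToeplitz (expShift c b) n m).det
  set D := (toeplitz (expShift c b) n).det
  set D' := (toeplitz (expShift c b) (n + 1)).det
  have hB : ‖B - c m * D‖ ≤ borderError c ‖b‖ n :=
    norm_det_borderedToeplitz_sub_mul_det_toeplitz_le hc hneg b n m
  have hD : ‖D' - D‖ ≤ borderError c ‖b‖ n := by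
    simpa [borderedToeplitz_zero, hone] using
      norm_det_borderedToeplitz_sub_mul_det_toeplitz_le hc hneg b n 0
  calc ‖B - c m * D'‖ = ‖(B - c m * D) - c m * (D' - D)‖ := by ring_nf
    _ ≤ ‖B - c m * D‖ + ‖c m‖ * ‖D' - D‖ := by
        rw [← norm_mul]
        exact norm_sub_le _ _
    _ ≤ borderError c ‖b‖ n + ‖c m‖ * borderError c ‖b‖ n := by gcongr
    _ = _ := by ring

theorem norm_exp_neg_mul_det_toeplitz_sub_one_le (hc : Summable c) (hneg : ∀ ν < 0, c ν = 0)
    (hone : c 0 = 1) (b : 𝕜) (n : ℕ) :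
    ‖NormedSpace.exp (b • -c 1) * (toeplitz (expShift c b) (n + 1)).det - 1‖ ≤
      Real.exp (‖b‖ * ‖c 1‖) * ((1 + ‖c 1‖) * borderError c ‖b‖ n) * ‖b‖ := by
  have hderiv (x : 𝕜) : HasDerivAt
      (fun y => NormedSpace.exp (y • -c 1) * (toeplitz (expShift c y) (n + 1)).det)
      (NormedSpace.exp (x • -c 1) * ((borderedToeplitz (expShift c x) n 1).det -
        c 1 * (toeplitz (expShift c x) (n + 1)).det)) x := by
    refine ((hasDerivAt_exp_smul_const (-c 1) x).mul (hasDerivAt_det_toeplitz_succ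
      (fun ν => hasDerivAt_expShift hc ν x) n)).congr_deriv ?_
    ring
  have hderiv_le (x : 𝕜) (hx : x ∈ Metric.closedBall 0 ‖b‖) :
      ‖NormedSpace.exp (x • -c 1) * ((borderedToeplitz (expShift c x) n 1).det -
        c 1 * (toeplitz (expShift c x) (n + 1)).det)‖ ≤
      Real.exp (‖b‖ * ‖c 1‖) * ((1 + ‖c 1‖) * borderError c ‖b‖ n) := by
    have hx : ‖x‖ ≤ ‖b‖ := mem_closedBall_zero_iff.mp hx
    have hexp : ‖NormedSpace.exp (x • -c 1)‖ ≤ Real.exp (‖b‖ * ‖c 1‖) := by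
      refine (norm_exp_le_exp_norm _).trans ?_
      rw [norm_smul, norm_neg]
      gcongr
    have hdet := norm_det_borderedToeplitz_sub_mul_det_toeplitz_succ_le hc hneg hone x n 1
    rw [norm_mul]
    gcongr
    exact hdet.trans (mul_le_mul_of_nonneg_left (borderError_mono (norm_nonneg x) hx n)
      (by positivity))
  have hmean := (convex_closedBall (0 : 𝕜) ‖b‖).norm_image_sub_le_of_norm_hasDerivWithin_le
    (fun x _ => (hderiv x).hasDerivWithinAt) hderiv_le (x := 0) (y := b) (by simp) (by simp)
  simpa [det_toeplitz_of_upperTriangular hneg, hone] using hmean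

theorem isBigO_pow_div_factorial_exp (x κ : ℝ) :
    (fun n : ℕ => x ^ n / n !) =O[atTop] fun n : ℕ => Real.exp (-κ * n) := by
  refine .of_bound (Real.exp (|x| * Real.exp κ)) (.of_forall fun n => ?_)
  have hscale : |x| ^ n / n ! = (|x| * Real.exp κ) ^ n / n ! * Real.exp (-κ * n) := by
    rw [neg_mul, Real.exp_neg, mul_comm κ, Real.exp_nat_mul, mul_pow]
    field_simp
  rw [norm_div, norm_pow, Real.norm_eq_abs, RCLike.norm_natCast, Real.norm_eq_abs, Real.abs_exp,
    hscale]
  gcongr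
  exact Real.pow_div_factorial_le_exp _ (by positivity) n

theorem isBigO_borderError (c : ℤ → 𝕜) (r κ : ℝ) :
    borderError c r =O[atTop] fun n : ℕ => Real.exp (-κ * n) := by
  set x := (∑' ν, ‖c ν‖) * Real.exp r * r
  refine .trans (.of_bound |x| (.of_forall fun n => ?_)) (isBigO_pow_div_factorial_exp (2 * x) κ)
  have htwo : (n : ℝ) + 1 ≤ 2 ^ n := by exact_mod_cast n.lt_two_pow_self
  calc ‖borderError c r n‖ = (n + 1) * |x| ^ (n + 1) / n ! := by
        rw [borderError, norm_div, norm_mul, norm_pow, RCLike.norm_natCast, Real.norm_eq_abs,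
          Real.norm_eq_abs, abs_of_pos (by positivity : (0 : ℝ) < n + 1)]
    _ ≤ 2 ^ n * |x| ^ (n + 1) / n ! := by gcongr
    _ = |x| * ‖((2 * x) ^ n / n ! : ℝ)‖ := by
        rw [norm_div, norm_pow, norm_mul, RCLike.norm_natCast, Real.norm_eq_abs,
          Real.norm_eq_abs, abs_two]
        ring

theorem isBigO_det_toeplitz_sub_exp (hc : Summable c) (hneg : ∀ ν < 0, c ν = 0)
    (hone : c 0 = 1) (b : 𝕜) (κ : ℝ) :
    (fun n => (toeplitz (expShift c b) (n + 1)).det - NormedSpace.exp (b * c 1)) =O[atTop]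
      fun n : ℕ => Real.exp (-κ * n) := by
  have hcancel : NormedSpace.exp (b * c 1) * NormedSpace.exp (b • -c 1) = 1 := by
    rw [← NormedSpace.exp_add]
    simp
  have hfactor (n : ℕ) : (toeplitz (expShift c b) (n + 1)).det - NormedSpace.exp (b * c 1) =
      NormedSpace.exp (b * c 1) *
        (NormedSpace.exp (b • -c 1) * (toeplitz (expShift c b) (n + 1)).det - 1) := by
    linear_combination -(toeplitz (expShift c b) (n + 1)).det * hcancel
  simp_rw [hfactor]
  refine .const_mul_left (.trans (.of_bound
    (Real.exp (‖b‖ * ‖c 1‖) * (1 + ‖c 1‖) * ‖b‖) (.of_forall fun n => ?_))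
    (isBigO_borderError c ‖b‖ κ)) _
  rw [Real.norm_of_nonneg (borderError_nonneg (norm_nonneg b) n)]
  refine (norm_exp_neg_mul_det_toeplitz_sub_one_le hc hneg hone b n).trans_eq ?_
  ring

theorem isBigO_det_borderedToeplitz_sub (hc : Summable c) (hneg : ∀ ν < 0, c ν = 0)
    (hone : c 0 = 1) (b : 𝕜) (m : ℕ) (κ : ℝ) :
    (fun n => (borderedToeplitz (expShift c b) n m).det - c m * NormedSpace.exp (b * c 1))
      =O[atTop] fun n : ℕ => Real.exp (-κ * n) := by
  have hB : (fun n => (borderedToeplitz (expShift c b) n m).det -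
      c m * (toeplitz (expShift c b) (n + 1)).det) =O[atTop] fun n : ℕ => Real.exp (-κ * n) :=
    .trans (.of_bound (1 + ‖c m‖) (.of_forall fun n =>
      (norm_det_borderedToeplitz_sub_mul_det_toeplitz_succ_le hc hneg hone b n m).trans
        (by gcongr; exact le_abs_self _))) (isBigO_borderError c ‖b‖ κ)
  refine (hB.add ((isBigO_det_toeplitz_sub_exp hc hneg hone b κ).const_mul_left (c m))).congr_left
    fun n => ?_
  ring

end Asymptotics

section Bessel

/-- The Laurent coefficients of `e^{az}`, which vanish at negative indices. -/
noncomputable def expCoeff {𝕜 : Type*} [DivisionRing 𝕜] (a : 𝕜) (ν : ℤ) : 𝕜 :=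
  if 0 ≤ ν then a ^ ν.toNat / ν.toNat ! else 0

section ExpCoeff

variable {𝕜 : Type*}

@[simp]
theorem expCoeff_natCast [DivisionRing 𝕜] (a : 𝕜) (m : ℕ) : expCoeff a m = a ^ m / m ! := by
  simp [expCoeff]

theorem expCoeff_of_neg [DivisionRing 𝕜] (a : 𝕜) {ν : ℤ} (hν : ν < 0) : expCoeff a ν = 0 :=
  if_neg hν.not_ge

@[simp]
theorem expCoeff_zero [DivisionRing 𝕜] (a : 𝕜) : expCoeff a 0 = 1 := by
  simp [expCoeff]

@[simp]
theorem expCoeff_one [DivisionRing 𝕜] (a : 𝕜) : expCoeff a 1 = a := by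
  simp [expCoeff]

theorem summable_expCoeff [RCLike 𝕜] (a : 𝕜) : Summable (expCoeff a) := by
  refine (Nat.cast_injective.summable_iff fun ν hν => expCoeff_of_neg a ?_).mp ?_
  · contrapose! hν
    exact ⟨ν.toNat, Int.toNat_of_nonneg hν⟩
  · simpa [Function.comp_def] using NormedSpace.expSeries_div_summable a

theorem hasSum_diagonal_expShift_expCoeff [RCLike 𝕜] (a b : 𝕜) (ν : ℤ) :
    HasSum (fun p : ℕ × ℕ => a ^ p.1 / p.1 ! * (b ^ p.2 / p.2 !) *
      if (p.1 - p.2 : ℤ) = ν then 1 else 0) (expShift (expCoeff a) b ν) := by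
  have hinj : Function.Injective fun k : ℕ => ((ν + k).toNat, k) :=
    fun _ _ h => (Prod.ext_iff.mp h).2
  refine (hinj.hasSum_iff fun p hp => ?_).mp ?_
  · rw [if_neg, mul_zero]
    rintro rfl
    exact hp ⟨p.2, by simp⟩
  · convert! (summable_expShift (summable_expCoeff a) b ν).of_norm.hasSum using 2 with k
    by_cases hk : 0 ≤ ν + k
    · simp [expCoeff, hk]
    · have hne : ((ν + k).toNat - k : ℤ) ≠ ν := by omega
      simp only [Function.comp_apply, expCoeff, if_neg hk, if_neg hne, mul_zero, zero_mul]

end ExpCoeff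

theorem hasSum_exp_add {𝕜 : Type*} [RCLike 𝕜] (z w : 𝕜) :
    HasSum (fun p : ℕ × ℕ => z ^ p.1 / p.1 ! * (w ^ p.2 / p.2 !)) (NormedSpace.exp (z + w)) := by
  have hsummable := summable_mul_of_summable_norm (NormedSpace.norm_expSeries_div_summable z)
    (NormedSpace.norm_expSeries_div_summable w)
  have hproduct := (NormedSpace.expSeries_div_hasSum_exp z).mul
    (NormedSpace.expSeries_div_hasSum_exp w) hsummable
  rwa [← NormedSpace.exp_add] at hproduct

theorem hasSum_exp_two_mul_cos (t θ : ℝ) :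
    HasSum (fun p : ℕ × ℕ => t ^ p.1 / p.1 ! * (t ^ p.2 / p.2 !) * Real.cos ((p.1 - p.2 : ℤ) * θ))
      (Real.exp (2 * t * Real.cos θ)) := by
  have hsymbol : t * Complex.exp (θ * Complex.I) + t * Complex.exp (-θ * Complex.I) =
      (2 * t * Real.cos θ : ℝ) := by
    rw [← mul_add, ← Complex.two_cos]
    push_cast
    ring
  have hterm (p : ℕ × ℕ) : (t * Complex.exp (θ * Complex.I)) ^ p.1 / p.1 ! *
      ((t * Complex.exp (-θ * Complex.I)) ^ p.2 / p.2 !) =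
      (t ^ p.1 / p.1 ! * (t ^ p.2 / p.2 !) : ℝ) *
        Complex.exp (((p.1 - p.2 : ℤ) * θ : ℝ) * Complex.I) := by
    have hexp : Complex.exp (((p.1 - p.2 : ℤ) * θ : ℝ) * Complex.I) =
        Complex.exp (θ * Complex.I) ^ p.1 * Complex.exp (-θ * Complex.I) ^ p.2 := by
      rw [← Complex.exp_nat_mul, ← Complex.exp_nat_mul, ← Complex.exp_add]
      push_cast
      ring_nf
    rw [hexp, mul_pow, mul_pow]
    push_cast
    ring
  have hre := Complex.hasSum_re
    (hasSum_exp_add (t * Complex.exp (θ * Complex.I)) (t * Complex.exp (-θ * Complex.I)))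
  simpa only [hterm, hsymbol, ← Complex.exp_eq_exp_ℂ, Complex.re_ofReal_mul,
    Complex.exp_ofReal_mul_I_re, Complex.exp_ofReal_re] using hre

theorem integral_cos_int_mul (k : ℤ) :
    ∫ θ in (0 : ℝ)..π, Real.cos (k * θ) = if k = 0 then π else 0 := by
  rcases eq_or_ne k 0 with rfl | hk
  · simp
  · simp [intervalIntegral.integral_comp_mul_left, hk, Real.sin_int_mul_pi]

theorem integral_cos_int_mul_mul_cos_int_mul (k l : ℤ) :
    ∫ θ in (0 : ℝ)..π, Real.cos (k * θ) * Real.cos (l * θ) =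
      π / 2 * ((if k = l then 1 else 0) + if k = -l then 1 else 0) := by
  have hproduct (θ : ℝ) : Real.cos (k * θ) * Real.cos (l * θ) =
      1 / 2 * (Real.cos ((k - l : ℤ) * θ) + Real.cos ((k + l : ℤ) * θ)) := by
    push_cast
    rw [sub_mul, add_mul, Real.cos_sub, Real.cos_add]
    ring
  simp_rw [hproduct]
  rw [intervalIntegral.integral_const_mul, intervalIntegral.integral_add
    (Continuous.intervalIntegrable (by fun_prop) _ _)
    (Continuous.intervalIntegrable (by fun_prop) _ _), integral_cos_int_mul, integral_cos_int_mul]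
  simp only [sub_eq_zero, add_eq_zero_iff_eq_neg]
  split_ifs <;> ring

theorem hasSum_besselI_two_mul (ν : ℤ) (t : ℝ) :
    HasSum (fun p : ℕ × ℕ => t ^ p.1 / p.1 ! * (t ^ p.2 / p.2 !) *
      (((if (p.1 - p.2 : ℤ) = ν then 1 else 0) + if (p.1 - p.2 : ℤ) = -ν then 1 else 0) / 2))
      (besselI ν (2 * t)) := by
  have hsummable : Summable fun p : ℕ × ℕ => ‖t ^ p.1 / p.1 ! * (t ^ p.2 / p.2 !)‖ :=
    summable_mul_of_summable_norm (NormedSpace.norm_expSeries_div_summable t)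
      (NormedSpace.norm_expSeries_div_summable t) |>.norm
  have hintegral := intervalIntegral.hasSum_integral_of_dominated_convergence
    (μ := MeasureTheory.volume) (a := 0) (b := π)
    (F := fun (p : ℕ × ℕ) θ => t ^ p.1 / p.1 ! * (t ^ p.2 / p.2 !) *
      (Real.cos ((p.1 - p.2 : ℤ) * θ) * Real.cos (ν * θ)))
    (f := fun θ => Real.exp (2 * t * Real.cos θ) * Real.cos (ν * θ))
    (fun p _ => ‖t ^ p.1 / p.1 ! * (t ^ p.2 / p.2 !)‖)
    (fun p => Continuous.aestronglyMeasurable (by fun_prop))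
    (fun p => .of_forall fun θ _ => ?_)
    (.of_forall fun _ _ => hsummable) intervalIntegrable_const
    (.of_forall fun θ _ => by
      simpa only [mul_assoc] using (hasSum_exp_two_mul_cos t θ).mul_right (Real.cos (ν * θ)))
  · refine (hintegral.mul_left (1 / π)).congr_fun fun p => ?_
    rw [intervalIntegral.integral_const_mul, integral_cos_int_mul_mul_cos_int_mul]
    field_simp
  · rw [norm_mul, norm_mul (Real.cos _)]
    refine mul_le_of_le_one_right (norm_nonneg _) (mul_le_one₀ ?_ (norm_nonneg _) ?_) <;>
      exact Real.abs_cos_le_one _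

theorem besselI_two_mul_eq_expShift (ν : ℤ) (t : ℝ) :
    besselI ν (2 * t) = expShift (expCoeff t) t ν := by
  have hdiag := hasSum_diagonal_expShift_expCoeff t t ν
  have hantidiag : HasSum (fun p : ℕ × ℕ => t ^ p.1 / p.1 ! * (t ^ p.2 / p.2 !) *
      if (p.1 - p.2 : ℤ) = -ν then 1 else 0) (expShift (expCoeff t) t ν) := by
    refine ((Equiv.prodComm ℕ ℕ).hasSum_iff.mpr hdiag).congr_fun fun p => ?_
    have hswap : (p.1 - p.2 : ℤ) = -ν ↔ (p.2 - p.1 : ℤ) = ν := by omega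
    simp [hswap, mul_comm]
  refine (hasSum_besselI_two_mul ν t).unique ?_
  convert! (hdiag.add hantidiag).div_const 2 using 1
  · ext p
    ring
  · ring

theorem of_besselI_eq_borderedToeplitz (T : ℝ) {β : ℕ} (hβ : 1 ≤ β) (n : ℕ) :
    (of fun j k : Fin (n + 1) => if (k : ℕ) < n then besselI ((k : ℤ) - (j : ℤ)) T
      else besselI ((n : ℤ) + (β : ℤ) - (j : ℤ) - 1) T) =
    borderedToeplitz (expShift (expCoeff (T / 2)) (T / 2)) n (β - 1) := by
  ext j k
  simp only [borderedToeplitz, borderedIndex, of_apply, ← besselI_two_mul_eq_expShift,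
    mul_div_cancel₀ T two_ne_zero]
  split_ifs
  · rfl
  · congr 1
    omega

theorem isBigO_det_borderedToeplitz_expCoeff_sub (t : ℝ) (m : ℕ) (κ : ℝ) :
    (fun n => (borderedToeplitz (expShift (expCoeff t) t) n m).det -
      Real.exp (t ^ 2) * t ^ m / m !) =O[atTop] fun n : ℕ => Real.exp (-κ * n) := by
  have hlimit : expCoeff t m * NormedSpace.exp (t * expCoeff t 1) =
      Real.exp (t ^ 2) * t ^ m / m ! := by
    rw [expCoeff_natCast, expCoeff_one, ← Real.exp_eq_exp_ℝ, ← sq]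
    ring
  rw [← hlimit]
  exact isBigO_det_borderedToeplitz_sub (summable_expCoeff t) (fun _ => expCoeff_of_neg t)
    (expCoeff_zero t) t m κ

end Bessel

/-- Theorem 7.2: asymptotics of the single-bordered Toeplitz determinant of modified Bessel
functions describing the non-intersection probability of `n+1` continuous time random walks
whose top ending point is gapped by `β₁`. -/
theorem bordered_bessel_toeplitz_asymptotics
    (T : ℝ) (hT : 0 < T) (β₁ : ℕ) (hβ₁ : 1 ≤ β₁) :
    ∀ c > (0:ℝ), ∃ C > (0:ℝ), ∃ N : ℕ, ∀ n : ℕ, N ≤ n →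
      |Matrix.det (Matrix.of fun j k : Fin (n + 1) =>
          if (k : ℕ) < n then besselI ((k : ℤ) - (j : ℤ)) T
          else besselI ((n : ℤ) + (β₁ : ℤ) - (j : ℤ) - 1) T) -
        Real.exp (T ^ 2 / 4) * (T / 2) ^ (β₁ - 1) / (Nat.factorial (β₁ - 1) : ℝ)|
      ≤ C * (Real.exp (T ^ 2 / 4) * (T / 2) ^ (β₁ - 1) / (Nat.factorial (β₁ - 1) : ℝ)) *
        Real.exp (-c * n) := by
  intro c _
  have hsq : T ^ 2 / 4 = (T / 2) ^ 2 := by ring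
  rw [hsq]
  set L := Real.exp ((T / 2) ^ 2) * (T / 2) ^ (β₁ - 1) / (Nat.factorial (β₁ - 1) : ℝ)
  have hL : 0 < L := by positivity
  obtain ⟨K, hK, hbound⟩ :=
    (isBigO_det_borderedToeplitz_expCoeff_sub (T / 2) (β₁ - 1) c).exists_pos
  obtain ⟨N, hN⟩ := eventually_atTop.mp hbound.bound
  refine ⟨K / L, by positivity, N, fun n hn => ?_⟩
  rw [div_mul_cancel₀ _ hL.ne', of_besselI_eq_borderedToeplitz T hβ₁]
  simpa using hN n hn
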